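/- For every Boolean function f : {0,1}^n → {0,1}, the sensitivity satisfies s(f) ≥ √(deg(f)), i.e. s(f)^2 ≥ deg(f). -/

import Mathlib

/-- The real value of a bit: `true ↦ 1`, `false ↦ 0`. -/
def bval (b : Bool) : ℝ := if b then 1 else 0

/-- The sensitivity `s(f)` of a Boolean function `f : {0,1}^n → {0,1}`:
the maximum over inputs `x` of the number of coordinates `i` such that flipping
the `i`-th bit of `x` changes the value of `f`. -/
def sens {n : ℕ} (f : (Fin n → Bool) → Bool) : ℕ :=
  Finset.univ.sup fun x : Fin n → Bool =>
    (Finset.univ.filter fun i : Fin n => f (Function.update x i (!x i)) ≠ f x).card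

/-- The block sensitivity `bs(f)` of a Boolean function `f : {0,1}^n → {0,1}`:
the maximum `t` such that there are an input `x` and `t` pairwise disjoint nonempty
blocks `B₁, …, B_t` of coordinates, flipping any one of which changes the value of `f`. -/
noncomputable def blockSens {n : ℕ} (f : (Fin n → Bool) → Bool) : ℕ :=
  sSup {t : ℕ | ∃ x : Fin n → Bool, ∃ B : Fin t → Finset (Fin n),
    (∀ i, (B i).Nonempty) ∧ (∀ i j, i ≠ j → Disjoint (B i) (B j)) ∧
    (∀ i, f (fun k => if k ∈ B i then !x k else x k) ≠ f x)}

/-- A multivariate polynomial is multilinear if each variable occurs with exponent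
at most 1 in every monomial. -/
def Multilinear {n : ℕ} (p : MvPolynomial (Fin n) ℝ) : Prop :=
  ∀ m ∈ p.support, ∀ i : Fin n, m i ≤ 1

/-- A real polynomial `p` represents the Boolean function `f` if `p(x) = f(x)` for
all `x ∈ {0,1}^n`. -/
def Represents {n : ℕ} (p : MvPolynomial (Fin n) ℝ) (f : (Fin n → Bool) → Bool) : Prop :=
  ∀ x : Fin n → Bool, MvPolynomial.eval (fun i => bval (x i)) p = bval (f x)

/-- A real polynomial `p` approximates the Boolean function `f` if
`|p(x) − f(x)| < 1/3` for all `x ∈ {0,1}^n`. -/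
def Approximates {n : ℕ} (p : MvPolynomial (Fin n) ℝ) (f : (Fin n → Bool) → Bool) : Prop :=
  ∀ x : Fin n → Bool, |MvPolynomial.eval (fun i => bval (x i)) p - bval (f x)| < 1 / 3

/-!
Huang's argument. The coefficient of a monomial `∏ i ∈ S, x i` in the multilinear polynomial of `f`
is, up to sign, the correlation of `f` with the parity function on the subcube `{0,1}^S`, where the
remaining coordinates are `0`. If it does not vanish, then the points of the subcube where `f`
agrees with the parity do not make up exactly half of it. Two neighbouring points on the same side
of this partition have different values under `f`, so it suffices that more than half of the points
of a `d`-dimensional cube always contain a point with at least `√d` neighbours among them.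

For this, write the signed adjacency operator of the cube as a sum of `d` anticommuting involutions.
It squares to `d` and anticommutes with multiplication by the parity, so its `√d`-eigenspace has at
least half of the full dimension and contains a nonzero `v` supported on the given set `H`. At a
point `x` where `|v|` is maximal, `√d * |v x|` is at most the number of neighbours of `x` in `H`
times `|v x|`.
-/

open Finset Function Module

section LinearAlgebra

lemma sum_mul_sum_of_anticomm {R ι : Type*} [Ring R] (s : Finset ι) (a : ι → R)
    (ha : (s : Set ι).Pairwise fun i j => a i * a j = -(a j * a i)) :
    (∑ i ∈ s, a i) * ∑ i ∈ s, a i = ∑ i ∈ s, a i * a i := by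
  classical
  induction s using Finset.induction_on with
  | empty => simp
  | insert j s hj ih =>
    have hs : (∑ i ∈ s, a i) * ∑ i ∈ s, a i = ∑ i ∈ s, a i * a i :=
      ih (ha.mono (by simp))
    have hcross : a j * ∑ i ∈ s, a i = -((∑ i ∈ s, a i) * a j) := by
      rw [mul_sum, sum_mul, ← sum_neg_distrib]
      refine sum_congr rfl fun i hi => ha (by simp) (by simp [hi]) ?_
      rintro rfl
      exact hj hi
    rw [sum_insert hj, sum_insert hj, add_mul, mul_add, mul_add, hs, hcross]
    abel

lemma exists_mem_ne_zero_vanishing_of_card_lt_finrank {K α : Type*} [Field K] [Finite α]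
    (W : Submodule K (α → K)) (T : Finset α) (hT : #T < finrank K W) :
    ∃ v ∈ W, v ≠ 0 ∧ ∀ x ∈ T, v x = 0 := by
  let restrict : W →ₗ[K] T → K := LinearMap.funLeft K K Subtype.val ∘ₗ W.subtype
  have hker : LinearMap.ker restrict ≠ ⊥ :=
    LinearMap.ker_ne_bot_of_finrank_lt (by simpa using hT)
  obtain ⟨v, hv, hv0⟩ := (Submodule.ne_bot_iff _).1 hker
  exact ⟨v, v.2, by simpa using hv0, fun x hx => congrFun (LinearMap.mem_ker.1 hv) ⟨x, hx⟩⟩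

variable {K V : Type*} [Field K] [AddCommGroup V] [Module K V] [FiniteDimensional K V]

lemma finrank_eigenspace_neg_le_of_anticomm {A D : End K V} (hD : Injective D)
    (hAD : A * D = -(D * A)) (μ : K) :
    finrank K (A.eigenspace (-μ)) ≤ finrank K (A.eigenspace μ) := by
  have hmaps : (A.eigenspace (-μ)).map D ≤ A.eigenspace μ := by
    rintro _ ⟨v, hv, rfl⟩
    have hADv : A (D v) = -D (A v) := LinearMap.congr_fun hAD v
    have hAv : A v = -μ • v := End.mem_eigenspace_iff.1 hv
    rw [End.mem_eigenspace_iff, hADv, hAv, map_smul, neg_smul, neg_neg]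
  calc finrank K (A.eigenspace (-μ))
      = finrank K ((A.eigenspace (-μ)).map D) :=
        (Submodule.equivMapOfInjective D hD _).finrank_eq
    _ ≤ finrank K (A.eigenspace μ) := Submodule.finrank_mono hmaps

lemma finrank_le_two_mul_finrank_eigenspace_of_anticomm {A D : End K V} {μ : K}
    (hA : A * A = (μ * μ) • 1) (hD : Injective D) (hAD : A * D = -(D * A)) :
    finrank K V ≤ 2 * finrank K (A.eigenspace μ) := by
  have hker : LinearMap.ker (A + μ • 1) = A.eigenspace (-μ) := by
    ext v
    simp [eq_neg_iff_add_eq_zero]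
  have hrange : LinearMap.range (A + μ • 1) ≤ A.eigenspace μ := by
    rintro _ ⟨v, rfl⟩
    have hAAv : A (A v) = (μ * μ) • v := LinearMap.congr_fun hA v
    simp [hAAv, smul_smul, add_comm]
  have hrank := LinearMap.finrank_range_add_finrank_ker (A + μ • 1)
  rw [hker] at hrank
  have := Submodule.finrank_mono hrange
  have := finrank_eigenspace_neg_le_of_anticomm hD hAD μ
  omega

end LinearAlgebra

section Flip

variable {ι κ : Type*} [DecidableEq ι] [DecidableEq κ]

/-- The neighbour of the point `x` of the cube in direction `i`, usually written
`x^(i)`. -/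
def flipBit (i : ι) (x : ι → Bool) : ι → Bool := update x i (!x i)

@[simp]
lemma flipBit_flipBit (i : ι) (x : ι → Bool) : flipBit i (flipBit i x) = x := by
  simp [flipBit]

lemma flipBit_comm (i j : ι) (x : ι → Bool) :
    flipBit i (flipBit j x) = flipBit j (flipBit i x) := by
  obtain rfl | hij := eq_or_ne i j
  · rfl
  · simp [flipBit, hij, hij.symm, update_comm hij]

lemma extend_flipBit {e : κ → ι} (he : Injective e) (x : κ → Bool) (y : ι → Bool) (i : κ) :
    extend e (flipBit i x) y = flipBit (e i) (extend e x y) := by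
  funext k
  by_cases hk : ∃ j, e j = k
  · obtain ⟨j, rfl⟩ := hk
    simp [flipBit, he.extend_apply, update_apply, he.eq_iff]
  · have hki : k ≠ e i := fun h => hk ⟨i, h.symm⟩
    simp [flipBit, extend_apply' _ _ _ hk, hki]

lemma card_sensitive_extend_le_sens {n : ℕ} [Fintype κ] (f : (Fin n → Bool) → Bool)
    {e : κ → Fin n} (he : Injective e) (x : κ → Bool) (y : Fin n → Bool) :
    #{i | f (extend e (flipBit i x) y) ≠ f (extend e x y)} ≤ sens f := by
  calc #{i | f (extend e (flipBit i x) y) ≠ f (extend e x y)}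
      ≤ #{j | f (flipBit j (extend e x y)) ≠ f (extend e x y)} := by
        refine card_le_card_of_injOn e (fun i hi => ?_) he.injOn
        simpa [extend_flipBit he] using hi
    _ ≤ sens f :=
        le_sup (f := fun z => #{j | f (flipBit j z) ≠ f z}) (mem_univ (extend e x y))

end Flip

section Walsh

variable {ι : Type*}

/-- The sign `(-1)^b` of a bit. -/
def bsign (b : Bool) : ℝ := if b then -1 else 1

lemma bsign_eq_one_or_neg_one (b : Bool) : bsign b = 1 ∨ bsign b = -1 := by
  cases b <;> simp [bsign]

lemma bsign_not (b : Bool) : bsign (!b) = -bsign b := by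
  cases b <;> simp [bsign]

lemma bsign_eq_one_sub_two_mul_bval (b : Bool) : bsign b = 1 - 2 * bval b := by
  cases b <;> norm_num [bsign, bval]

/-- The Walsh character `χ_S`, the parity of the bits in `S` with values `±1`. -/
def walsh (S : Finset ι) (x : ι → Bool) : ℝ := ∏ k ∈ S, bsign (x k)

lemma walsh_eq_one_or_neg_one (S : Finset ι) (x : ι → Bool) : walsh S x = 1 ∨ walsh S x = -1 := by
  refine prod_induction _ (fun r : ℝ => r = 1 ∨ r = -1) ?_ (by simp)
    fun k _ => bsign_eq_one_or_neg_one (x k)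
  rintro a b (rfl | rfl) (rfl | rfl) <;> simp

lemma walsh_mul_self (S : Finset ι) (x : ι → Bool) : walsh S x * walsh S x = 1 :=
  mul_self_eq_one_iff.2 (walsh_eq_one_or_neg_one S x)

lemma abs_walsh (S : Finset ι) (x : ι → Bool) : |walsh S x| = 1 := by
  rcases walsh_eq_one_or_neg_one S x with h | h <;> simp [h]

variable [DecidableEq ι]

lemma walsh_flipBit_of_notMem {S : Finset ι} {i : ι} (hi : i ∉ S) (x : ι → Bool) :
    walsh S (flipBit i x) = walsh S x := by
  refine prod_congr rfl fun k hk => ?_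
  rw [flipBit, update_of_ne (ne_of_mem_of_not_mem hk hi)]

lemma walsh_flipBit_of_mem {S : Finset ι} {i : ι} (hi : i ∈ S) (x : ι → Bool) :
    walsh S (flipBit i x) = -walsh S x := by
  have hsplit (y : ι → Bool) : walsh S y = bsign (y i) * walsh (S.erase i) y :=
    (mul_prod_erase S _ hi).symm
  rw [hsplit, hsplit x, walsh_flipBit_of_notMem (notMem_erase i S), flipBit, update_self,
    bsign_not, neg_mul]

end Walsh

section SignedAdjacency

variable {ι : Type*} [Fintype ι] [LinearOrder ι]

/-- The adjacency operator of the cube edges in direction `i`, where the edge at `x` carries the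
sign `χ_{k < i}(x)`. With these signs the operators of different directions anticommute. -/
def signedFlip (i : ι) : End ℝ ((ι → Bool) → ℝ) :=
  LinearMap.mulLeft ℝ (walsh {k | k < i}) ∘ₗ LinearMap.funLeft ℝ ℝ (flipBit i)

lemma signedFlip_apply (i : ι) (v : (ι → Bool) → ℝ) (x : ι → Bool) :
    signedFlip i v x = walsh {k | k < i} x * v (flipBit i x) := rfl

lemma signedFlip_mul_self (i : ι) : signedFlip i * signedFlip i = 1 := by
  refine LinearMap.ext fun v => funext fun x => ?_
  rw [End.mul_apply, signedFlip_apply, signedFlip_apply, walsh_flipBit_of_notMem (by simp),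
    flipBit_flipBit, ← mul_assoc, walsh_mul_self, one_mul, End.one_apply]

lemma signedFlip_anticomm_of_lt {i j : ι} (hij : i < j) :
    signedFlip i * signedFlip j = -(signedFlip j * signedFlip i) := by
  refine LinearMap.ext fun v => funext fun x => ?_
  simp only [End.mul_apply, LinearMap.neg_apply, Pi.neg_apply, signedFlip_apply]
  rw [walsh_flipBit_of_mem (by simpa using hij), walsh_flipBit_of_notMem (by simpa using hij.le),
    flipBit_comm]
  ring

lemma signedFlip_anticomm {i j : ι} (hij : i ≠ j) :
    signedFlip i * signedFlip j = -(signedFlip j * signedFlip i) := by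
  rcases hij.lt_or_gt with h | h
  · exact signedFlip_anticomm_of_lt h
  · rw [signedFlip_anticomm_of_lt h, neg_neg]

/-- Huang's signed adjacency operator of the cube. -/
def signedAdj : End ℝ ((ι → Bool) → ℝ) := ∑ i, signedFlip i

lemma signedAdj_mul_self :
    (signedAdj * signedAdj : End ℝ ((ι → Bool) → ℝ)) = (Fintype.card ι : ℝ) • 1 := by
  rw [signedAdj, sum_mul_sum_of_anticomm univ signedFlip fun i _ j _ => signedFlip_anticomm]
  simp [signedFlip_mul_self, Nat.cast_smul_eq_nsmul]

lemma signedAdj_anticomm_mulLeft_walsh_univ :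
    signedAdj * LinearMap.mulLeft ℝ (walsh (univ : Finset ι)) =
      -(LinearMap.mulLeft ℝ (walsh univ) * signedAdj) := by
  have hflip (i : ι) : signedFlip i * LinearMap.mulLeft ℝ (walsh univ) =
      -(LinearMap.mulLeft ℝ (walsh univ) * signedFlip i) := by
    refine LinearMap.ext fun v => funext fun x => ?_
    simp only [End.mul_apply, LinearMap.neg_apply, Pi.neg_apply, signedFlip_apply,
      LinearMap.mulLeft_apply, Pi.mul_apply, walsh_flipBit_of_mem (mem_univ i)]
    ring
  rw [signedAdj, sum_mul, mul_sum, ← sum_neg_distrib]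
  exact sum_congr rfl fun i _ => hflip i

lemma two_pow_card_le_two_mul_finrank_eigenspace_signedAdj :
    2 ^ Fintype.card ι ≤
      2 * finrank ℝ ((signedAdj (ι := ι)).eigenspace √(Fintype.card ι)) := by
  have hinj : Injective (LinearMap.mulLeft ℝ (walsh (univ : Finset ι))) := by
    have hinv : walsh (univ : Finset ι) * walsh univ = 1 := funext (walsh_mul_self univ)
    exact (IsUnit.of_mul_eq_one _ hinv).mul_right_injective
  have hsq : (signedAdj * signedAdj : End ℝ ((ι → Bool) → ℝ)) =
      (√(Fintype.card ι) * √(Fintype.card ι)) • 1 := by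
    rw [Real.mul_self_sqrt (Nat.cast_nonneg _), signedAdj_mul_self]
  simpa using finrank_le_two_mul_finrank_eigenspace_of_anticomm hsq hinj
    signedAdj_anticomm_mulLeft_walsh_univ

lemma exists_mem_abs_le_card_neighbors {v : (ι → Bool) → ℝ} {μ : ℝ} {H : Finset (ι → Bool)}
    (hv : v ∈ signedAdj.eigenspace μ) (hv0 : v ≠ 0) (hvH : ∀ x ∉ H, v x = 0) :
    ∃ x ∈ H, |μ| ≤ #{i | flipBit i x ∈ H} := by
  obtain ⟨x, hmax⟩ := Finite.exists_max fun x => |v x|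
  have hpos : 0 < |v x| := by
    obtain ⟨y, hy⟩ := ne_iff.1 hv0
    exact (abs_pos.2 hy).trans_le (hmax y)
  refine ⟨x, not_imp_comm.1 (hvH x) (abs_pos.1 hpos), le_of_mul_le_mul_right ?_ hpos⟩
  have hterm (i : ι) : |signedFlip i v x| ≤ if flipBit i x ∈ H then |v x| else 0 := by
    rw [signedFlip_apply, abs_mul, abs_walsh, one_mul]
    split_ifs with h
    · exact hmax _
    · simp [hvH _ h]
  calc |μ| * |v x| = |signedAdj v x| := by
        rw [End.mem_eigenspace_iff.1 hv, Pi.smul_apply, smul_eq_mul, abs_mul]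
    _ = |∑ i, signedFlip i v x| := by
        rw [signedAdj, LinearMap.sum_apply, Finset.sum_apply]
    _ ≤ ∑ i, |signedFlip i v x| := abs_sum_le_sum_abs _ _
    _ ≤ ∑ i, if flipBit i x ∈ H then |v x| else 0 := sum_le_sum fun i _ => hterm i
    _ = #{i | flipBit i x ∈ H} * |v x| := by
        rw [← sum_filter, sum_const, nsmul_eq_mul]

end SignedAdjacency

section Huang

variable {ι : Type*} [Fintype ι] [DecidableEq ι]

theorem exists_mem_card_le_sq_card_neighbors (H : Finset (ι → Bool)) (hH : #Hᶜ < #H) :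
    ∃ x ∈ H, Fintype.card ι ≤ #{i | flipBit i x ∈ H} ^ 2 := by
  let _ : LinearOrder ι := LinearOrder.lift' (Fintype.equivFin ι) (Fintype.equivFin ι).injective
  obtain rfl : ‹DecidableEq ι› = LinearOrder.toDecidableEq := Subsingleton.elim _ _
  have hdim : #Hᶜ < finrank ℝ ((signedAdj (ι := ι)).eigenspace √(Fintype.card ι)) := by
    have hcube : #H + #Hᶜ = 2 ^ Fintype.card ι := by simp [card_add_card_compl]
    have := two_pow_card_le_two_mul_finrank_eigenspace_signedAdj (ι := ι)
    omega
  obtain ⟨v, hv, hv0, hvH⟩ := exists_mem_ne_zero_vanishing_of_card_lt_finrank _ _ hdim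
  obtain ⟨x, hxH, hx⟩ :=
    exists_mem_abs_le_card_neighbors hv hv0 fun x hx => hvH x (mem_compl.2 hx)
  refine ⟨x, hxH, ?_⟩
  rw [abs_of_nonneg (Real.sqrt_nonneg _), Real.sqrt_le_left (Nat.cast_nonneg _)] at hx
  exact_mod_cast hx

theorem exists_card_le_sq_card_same_side_neighbors (H : Finset (ι → Bool)) (hH : #H ≠ #Hᶜ) :
    ∃ x, Fintype.card ι ≤ #{i | flipBit i x ∈ H ↔ x ∈ H} ^ 2 := by
  rcases hH.lt_or_gt with hlt | hlt
  · obtain ⟨x, hxH, hx⟩ := exists_mem_card_le_sq_card_neighbors Hᶜ (by rwa [compl_compl])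
    exact ⟨x, by simpa [mem_compl.1 hxH] using hx⟩
  · obtain ⟨x, hxH, hx⟩ := exists_mem_card_le_sq_card_neighbors H hlt
    exact ⟨x, by simpa [hxH] using hx⟩

end Huang

section ParityCorrelation

lemma sum_eq_card_sub_card_compl {α : Type*} [Fintype α] [DecidableEq α] {F : α → ℝ}
    (hF : ∀ x, F x = 1 ∨ F x = -1) :
    ∑ x, F x = #{x | F x = 1} - #({x | F x = 1} : Finset α)ᶜ := by
  have hone : ∑ x with F x = 1, F x = #{x | F x = 1} := by
    rw [sum_congr rfl fun x hx => (mem_filter.1 hx).2]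
    simp
  have hneg : ∑ x ∈ ({x | F x = 1} : Finset α)ᶜ, F x = -#({x | F x = 1} : Finset α)ᶜ := by
    rw [sum_congr rfl fun x hx => (hF x).resolve_left (by simpa using hx)]
    simp
  rw [← sum_add_sum_compl ({x | F x = 1} : Finset α), hone, hneg, sub_eq_add_neg]

variable {ι : Type*} [Fintype ι] [DecidableEq ι]

lemma sum_bsign_mul_bval_pow (e : ℕ) :
    ∑ b, bsign b * bval b ^ e = if e ≠ 0 then -1 else 0 := by
  by_cases he : e = 0 <;> simp [bsign, bval, he]

lemma sum_walsh_univ_mul_prod_bval_pow (m : ι → ℕ) :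
    ∑ x : ι → Bool, walsh univ x * ∏ i, bval (x i) ^ m i =
      if ∀ i, m i ≠ 0 then (-1) ^ Fintype.card ι else 0 := by
  calc ∑ x : ι → Bool, walsh univ x * ∏ i, bval (x i) ^ m i
      = ∑ x : ι → Bool, ∏ i, bsign (x i) * bval (x i) ^ m i := by
        simp only [walsh, prod_mul_distrib]
    _ = ∏ i, ∑ b, bsign b * bval b ^ m i := by
        rw [prod_univ_sum, Fintype.piFinset_univ]
    _ = if ∀ i, m i ≠ 0 then (-1) ^ Fintype.card ι else 0 := by
        simp only [sum_bsign_mul_bval_pow, prod_ite_zero, prod_const, mem_univ, true_imp_iff,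
          card_univ]

lemma sum_walsh_univ [Nonempty ι] : ∑ x : ι → Bool, walsh univ x = 0 := by
  simpa using sum_walsh_univ_mul_prod_bval_pow (0 : ι → ℕ)

lemma sum_walsh_univ_mul_bsign [Nonempty ι] (g : (ι → Bool) → Bool) :
    ∑ x, walsh univ x * bsign (g x) = -2 * ∑ x, walsh univ x * bval (g x) := by
  calc ∑ x, walsh univ x * bsign (g x)
      = ∑ x, walsh univ x - 2 * ∑ x, walsh univ x * bval (g x) := by
        rw [mul_sum, ← sum_sub_distrib]
        refine sum_congr rfl fun x _ => ?_
        rw [bsign_eq_one_sub_two_mul_bval]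
        ring
    _ = -2 * ∑ x, walsh univ x * bval (g x) := by rw [sum_walsh_univ]; ring

lemma ne_of_walsh_univ_mul_bsign_eq_one_iff {g : (ι → Bool) → Bool} {x : ι → Bool} {i : ι}
    (h : walsh univ (flipBit i x) * bsign (g (flipBit i x)) = 1 ↔
      walsh univ x * bsign (g x) = 1) :
    g (flipBit i x) ≠ g x := by
  intro heq
  rw [walsh_flipBit_of_mem (mem_univ i), heq] at h
  rcases walsh_eq_one_or_neg_one univ x with hw | hw <;>
    rcases bsign_eq_one_or_neg_one (g x) with hb | hb <;> norm_num [hw, hb] at h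

theorem exists_card_le_sq_card_sensitive {g : (ι → Bool) → Bool}
    (hg : ∑ x, walsh univ x * bval (g x) ≠ 0) :
    ∃ x, Fintype.card ι ≤ #{i | g (flipBit i x) ≠ g x} ^ 2 := by
  cases isEmpty_or_nonempty ι
  · exact ⟨isEmptyElim, by simp⟩
  let H : Finset (ι → Bool) := {x | walsh univ x * bsign (g x) = 1}
  have hpm (x : ι → Bool) : walsh univ x * bsign (g x) = 1 ∨ walsh univ x * bsign (g x) = -1 := by
    rcases walsh_eq_one_or_neg_one univ x with hw | hw <;>
      rcases bsign_eq_one_or_neg_one (g x) with hb | hb <;> simp [hw, hb]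
  have hH : #H ≠ #Hᶜ := by
    intro hcard
    have hsum := sum_eq_card_sub_card_compl hpm
    rw [sum_walsh_univ_mul_bsign, sub_eq_zero.2 (congrArg Nat.cast hcard)] at hsum
    simp [hg] at hsum
  obtain ⟨x, hx⟩ := exists_card_le_sq_card_same_side_neighbors H hH
  refine ⟨x, hx.trans (Nat.pow_le_pow_left (card_le_card ?_) 2)⟩
  exact monotone_filter_right univ fun i _ hi =>
    ne_of_walsh_univ_mul_bsign_eq_one_iff (by simpa [H] using hi)

end ParityCorrelation

section Coefficients

variable {ι : Type*} [DecidableEq ι]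

/-- The point of the cube that agrees with `x` on `S` and is `false` elsewhere. -/
noncomputable def zeroExtend (S : Finset ι) (x : S → Bool) : ι → Bool :=
  extend Subtype.val x fun _ => false

lemma prod_bval_zeroExtend_pow [Fintype ι] (S : Finset ι) (x : S → Bool) (m : ι →₀ ℕ) :
    ∏ i, bval (zeroExtend S x i) ^ m i =
      if m.support ⊆ S then ∏ i : S, bval (x i) ^ m i else 0 := by
  have hin : ∏ i ∈ S, bval (zeroExtend S x i) ^ m i = ∏ i : S, bval (x i) ^ m i := by
    rw [← prod_coe_sort]
    simp only [zeroExtend, Subtype.val_injective.extend_apply]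
  have hout : ∏ i ∈ Sᶜ, bval (zeroExtend S x i) ^ m i = if m.support ⊆ S then 1 else 0 := by
    have hfactor (i) (hi : i ∈ Sᶜ) :
        bval (zeroExtend S x i) ^ m i = if m i = 0 then 1 else 0 := by
      rw [zeroExtend, extend_apply' _ _ _ (by simpa using hi)]
      simp [bval, zero_pow_eq]
    rw [prod_congr rfl hfactor, prod_ite_zero, prod_const_one]
    congr 1
    simp [subset_iff, not_imp_comm]
  rw [← prod_mul_prod_compl S, hin, hout, mul_ite, mul_one, mul_zero]

lemma sum_walsh_mul_prod_bval_zeroExtend_pow [Fintype ι] (S : Finset ι) (m : ι →₀ ℕ) :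
    ∑ x : S → Bool, walsh univ x * ∏ i, bval (zeroExtend S x i) ^ m i =
      if m.support = S then (-1) ^ #S else 0 := by
  have hsupp : m.support = S ↔ m.support ⊆ S ∧ ∀ i : S, m i ≠ 0 := by
    simp [subset_antisymm_iff, subset_iff]
  by_cases hm : m.support ⊆ S
  · simp only [prod_bval_zeroExtend_pow, hsupp, hm, if_true, true_and,
      sum_walsh_univ_mul_prod_bval_pow (fun i : S => m i), Fintype.card_coe]
  · simp [prod_bval_zeroExtend_pow, hsupp, hm]

lemma sum_walsh_mul_eval_zeroExtend [Finite ι] (p : MvPolynomial ι ℝ) (S : Finset ι) :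
    ∑ x : S → Bool, walsh univ x * p.eval (fun i => bval (zeroExtend S x i)) =
      (-1) ^ #S * ∑ m ∈ p.support with m.support = S, p.coeff m := by
  have := Fintype.ofFinite ι
  calc ∑ x : S → Bool, walsh univ x * p.eval (fun i => bval (zeroExtend S x i))
      = ∑ m ∈ p.support, p.coeff m *
          ∑ x : S → Bool, walsh univ x * ∏ i, bval (zeroExtend S x i) ^ m i := by
        simp only [MvPolynomial.eval_eq', mul_sum, mul_left_comm]
        exact sum_comm
    _ = (-1) ^ #S * ∑ m ∈ p.support with m.support = S, p.coeff m := by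
        simp only [sum_walsh_mul_prod_bval_zeroExtend_pow, mul_ite, mul_zero, ← sum_filter,
          mul_comm, mul_sum]

end Coefficients

section Multilinear

variable {n : ℕ} {p : MvPolynomial (Fin n) ℝ}

lemma Multilinear.apply_eq_ite (hp : Multilinear p) {m : Fin n →₀ ℕ} (hm : m ∈ p.support)
    (i : Fin n) : m i = if i ∈ m.support then 1 else 0 := by
  have := hp m hm i
  split_ifs with hi
  · have := Finsupp.mem_support_iff.1 hi
    omega
  · exact Finsupp.notMem_support_iff.1 hi

lemma Multilinear.filter_support_eq (hp : Multilinear p) {m : Fin n →₀ ℕ} (hm : m ∈ p.support) :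
    {m' ∈ p.support | m'.support = m.support} = {m} := by
  ext m'
  simp only [mem_filter, mem_singleton]
  refine ⟨fun ⟨hm', h⟩ => Finsupp.ext fun i => ?_, by rintro rfl; exact ⟨hm, rfl⟩⟩
  rw [hp.apply_eq_ite hm', hp.apply_eq_ite hm, h]

lemma Multilinear.sum_eq_card_support (hp : Multilinear p) {m : Fin n →₀ ℕ}
    (hm : m ∈ p.support) : (m.sum fun _ e => e) = #m.support := by
  rw [Finsupp.sum, card_eq_sum_ones]
  exact sum_congr rfl fun i hi => by rw [hp.apply_eq_ite hm, if_pos hi]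

theorem Multilinear.card_support_le_sens_sq (hp : Multilinear p) {f : (Fin n → Bool) → Bool}
    (hrep : Represents p f) {m : Fin n →₀ ℕ} (hm : m ∈ p.support) :
    #m.support ≤ sens f ^ 2 := by
  have hcorr : ∑ x : m.support → Bool, walsh univ x * bval (f (zeroExtend m.support x)) ≠ 0 := by
    have hcoeff := sum_walsh_mul_eval_zeroExtend p m.support
    simp only [hrep _, hp.filter_support_eq hm, sum_singleton] at hcoeff
    rw [hcoeff]
    exact mul_ne_zero (by simp) (MvPolynomial.mem_support_iff.1 hm)
  obtain ⟨x, hx⟩ := exists_card_le_sq_card_sensitive hcorr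
  rw [Fintype.card_coe] at hx
  exact hx.trans (Nat.pow_le_pow_left
    (card_sensitive_extend_le_sens f Subtype.val_injective x fun _ => false) 2)

end Multilinear

/-- For every Boolean function `f`, `s(f) ≥ √(deg f)`, i.e. `s(f)² ≥ deg f`, where
`deg f` is the degree of the (unique) multilinear real polynomial representing `f`. -/
theorem sens_sq_ge_degree (n : ℕ) (f : (Fin n → Bool) → Bool)
    (p : MvPolynomial (Fin n) ℝ) (hml : Multilinear p) (hrep : Represents p f) :
    p.totalDegree ≤ sens f ^ 2 := by
  refine Finset.sup_le fun m hm => ?_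
  rw [hml.sum_eq_card_support hm]
  exact hml.card_support_le_sens_sq hrep hm
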